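/- Let f(z) = Σ_{n≥0} a_n z^n be analytic on the unit disk with |f(z)| ≤ 1 and set S_r = π Σ_{n≥1} n|a_n|^2 r^{2n}. Then for all r ≤ 1/3: Σ_{n≥0} |a_n| r^n + (16/9)·S_r/(π − S_r) ≤ 1. -/

import Mathlib

/-!
Every term on the left grows with `r`, so the inequality only has to be shown at `r = 1/3`. Put
`x = |a₀|` and `c = 1 - x²`. Two coefficient estimates carry the proof.

* `norm_coeff_le`: `|aₙ| ≤ c` for `n ≥ 1`. With `∑ n 9⁻ⁿ = 9/64` this gives `S ≤ (9/64) π c²`, hence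
  `(16/9) S / (π - S) ≤ 16 c² / (64 - 9 c²)`; in particular `S < π`.
* `tsum_sq_third_le`: `∑_{k ≥ 1} |aₖ|² 3⁻ᵏ ≤ c² / (3 - x²)`. By Schwarz–Pick,
  `|f - a₀| ≤ |z| |1 - ā₀ f| = |z| |c - ā₀ (f - a₀)|`; comparing the `ℓ²` norms of the Taylor
  coefficients of both sides on `|z|² = 1/3`, where `f - a₀` has no constant term, gives the bound.

AM-GM turns the second estimate into
`∑_{k ≥ 1} |aₖ| 3⁻ᵏ ≤ c (3 - x) / (4 (3 - x²)) + c / (2 (3 - x))`. Cruder bounds would not do: the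
constant `16/9` is sharp as `x → 1`, so the losses there must be of third order in `1 - x`, which they
are (`scalar_ineq`).

Both estimates rest on `tsum_sq_le_of_circle`, a Parseval comparison of two power series on the
circle.
-/

lemma hasSum_of_eq {α : Type*} [AddCommMonoid α] [TopologicalSpace α] {g h : ℕ → α} {s t : α}
    (hg : HasSum g t) (hgh : ∀ k, h k = g k) (hst : s = t) : HasSum h s := by
  rw [hst, funext hgh]; exact hg

open MeasureTheory in
/-- Parseval's identity for an absolutely convergent power series on the unit circle. -/
lemma norm_toLp_sq_eq (u : ℕ → ℂ) (hu : Summable fun k => ‖u k‖) (F : C(UnitAddCircle, ℂ))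
    (hF : ∀ t : UnitAddCircle, F t = ∑' k, u k * (fourier 1 t) ^ k) :
    HasSum (fun k => ‖u k‖ ^ 2)
      (‖ContinuousMap.toLp (E := ℂ) 2 AddCircle.haarAddCircle ℂ F‖ ^ 2) := by
  have hpow : ∀ (k : ℕ) (t : UnitAddCircle), (fourier (k : ℤ) t : ℂ) = (fourier 1 t) ^ k := by
    intro k t
    simp [fourier_apply, AddCircle.toCircle_nsmul]
  have hs : Summable fun k : ℕ => u k • (fourier (k : ℤ) : C(UnitAddCircle, ℂ)) := by
    refine Summable.of_norm ?_
    simpa [norm_smul, fourier_norm] using hu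
  have hsum : HasSum (fun k : ℕ => u k • (fourier (k : ℤ) : C(UnitAddCircle, ℂ))) F := by
    convert hs.hasSum
    ext t
    rw [hF, ← ContinuousMap.tsum_apply hs]
    simp only [ContinuousMap.smul_apply, hpow, smul_eq_mul]
  set X := ContinuousMap.toLp (E := ℂ) 2 AddCircle.haarAddCircle ℂ F with hX
  have hL : HasSum (fun k : ℕ => u k • (fourierLp 2 (k : ℤ) :
      Lp ℂ 2 (@AddCircle.haarAddCircle (1 : ℝ) _))) X := by
    have := hsum.mapL (ContinuousMap.toLp (E := ℂ) 2 (@AddCircle.haarAddCircle (1 : ℝ) _) ℂ)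
    simpa using this
  have horth : Orthonormal ℂ fun k : ℕ => (fourierLp 2 (k : ℤ) :
      Lp ℂ 2 (@AddCircle.haarAddCircle (1 : ℝ) _)) :=
    orthonormal_fourier.comp _ Nat.cast_injective
  have hcoef : ∀ j : ℕ, inner ℂ X (fourierLp 2 (j : ℤ)) = (starRingEnd ℂ) (u j) := by
    intro j
    rw [← inner_conj_symm]
    congr 1
    refine HasSum.unique (hL.mapL (innerSL ℂ (fourierLp 2 (j : ℤ)))) ?_
    refine hasSum_of_eq (hasSum_ite_eq j (u j)) (fun k => ?_) rfl
    have := orthonormal_iff_ite.mp horth j k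
    simp only [map_smul, innerSL_apply_apply, this]
    by_cases h : k = j
    · simp [h]
    · simp [h, Ne.symm h]
  have h2 := hL.mapL (innerSL ℂ X)
  simp only [map_smul, innerSL_apply_apply, hcoef, inner_self_eq_norm_sq_to_K, smul_eq_mul,
    Complex.mul_conj] at h2
  rw [← Complex.hasSum_ofReal]
  simpa [Complex.normSq_eq_norm_sq] using h2

/-- Parseval comparison: a pointwise bound `‖u‖ ≤ M ‖v‖` on the unit circle between two absolutely
convergent power series passes to their `ℓ²` norms of coefficients. -/
lemma tsum_sq_le_of_circle (u v : ℕ → ℂ) (hu : Summable fun k => ‖u k‖)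
    (hv : Summable fun k => ‖v k‖) (M : ℝ)
    (h : ∀ w : ℂ, ‖w‖ = 1 → ‖∑' k, u k * w ^ k‖ ≤ M * ‖∑' k, v k * w ^ k‖) :
    (Summable fun k => ‖u k‖ ^ 2) ∧ (Summable fun k => ‖v k‖ ^ 2) ∧
      ∑' k, ‖u k‖ ^ 2 ≤ M ^ 2 * ∑' k, ‖v k‖ ^ 2 := by
  have hn : ∀ t : UnitAddCircle, ‖(fourier 1 t : ℂ)‖ = 1 := fun t => by
    rw [fourier_one]; exact Circle.norm_coe _
  have key : ∀ p : ℕ → ℂ, (Summable fun k => ‖p k‖) →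
      Continuous fun t : UnitAddCircle => ∑' k, p k * (fourier 1 t : ℂ) ^ k := by
    intro p hp
    refine continuous_tsum (fun k => by fun_prop) hp fun k t => ?_
    rw [norm_mul, norm_pow, hn]; simp
  have hU := norm_toLp_sq_eq u hu ⟨_, key u hu⟩ fun t => rfl
  have hV := norm_toLp_sq_eq v hv ⟨_, key v hv⟩ fun t => rfl
  refine ⟨hU.summable, hV.summable, ?_⟩
  rw [hU.tsum_eq, hV.tsum_eq, ← mul_pow]
  refine pow_le_pow_left₀ (norm_nonneg _) ?_ 2
  refine MeasureTheory.Lp.norm_le_mul_norm_of_ae_le_mul ?_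
  filter_upwards [ContinuousMap.coeFn_toLp (E := ℂ) (p := 2) (𝕜 := ℂ)
      (@AddCircle.haarAddCircle (1 : ℝ) _) ⟨_, key u hu⟩,
    ContinuousMap.coeFn_toLp (E := ℂ) (p := 2) (𝕜 := ℂ)
      (@AddCircle.haarAddCircle (1 : ℝ) _) ⟨_, key v hv⟩] with t h1 h2
  rw [h1, h2]
  exact h _ (hn t)

section
variable {f : ℂ → ℂ} {a : ℕ → ℂ}

lemma summable_norm_coeff (hf : ∀ z : ℂ, ‖z‖ < 1 → HasSum (fun n => a n * z ^ n) (f z))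
    {ρ : ℝ} (h0 : 0 ≤ ρ) (h1 : ρ < 1) : Summable fun n => ‖a n‖ * ρ ^ n := by
  have := (hf ρ (by simpa [abs_of_nonneg h0] using h1)).summable.norm
  simpa [abs_of_nonneg h0] using this

lemma value_zero (hf : ∀ z : ℂ, ‖z‖ < 1 → HasSum (fun n => a n * z ^ n) (f z)) : f 0 = a 0 := by
  refine (hf 0 (by simp)).unique ?_
  refine hasSum_of_eq (hasSum_ite_eq 0 (a 0)) (fun n => ?_) rfl
  by_cases h : n = 0 <;> simp [h]

lemma differentiableOn_of_hasSum
    (hf : ∀ z : ℂ, ‖z‖ < 1 → HasSum (fun n => a n * z ^ n) (f z)) :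
    DifferentiableOn ℂ f (Metric.ball 0 1) := by
  intro z hz
  rw [mem_ball_zero_iff] at hz
  obtain ⟨t, hzt, ht⟩ := exists_between hz
  have ht0 : 0 ≤ t := (norm_nonneg z).trans hzt.le
  have hd : DifferentiableOn ℂ (fun w : ℂ => ∑' n, a n * w ^ n) (Metric.ball 0 t) := by
    refine Complex.differentiableOn_tsum_of_summable_norm (summable_norm_coeff hf ht0 ht)
      (fun n => by fun_prop) Metric.isOpen_ball fun n w hw => ?_
    rw [mem_ball_zero_iff] at hw
    rw [norm_mul, norm_pow]
    gcongr
  have hd' : DifferentiableOn ℂ f (Metric.ball 0 t) := hd.congr fun w hw => by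
    rw [mem_ball_zero_iff] at hw
    exact (hf w (hw.trans ht)).tsum_eq.symm
  exact (hd'.differentiableAt (Metric.isOpen_ball.mem_nhds
    (by simpa using hzt))).differentiableWithinAt

/-- The contraction property of the Toeplitz matrix `[[a₀, 0], [aₙ, a₀]]`: multiplication by `f`
does not increase the `ℓ²` norm of `x + y zⁿ`, and only two coefficients of the product are kept. -/
lemma toeplitz_two_le (hf : ∀ z : ℂ, ‖z‖ < 1 → HasSum (fun n => a n * z ^ n) (f z))
    (hbd : ∀ z : ℂ, ‖z‖ < 1 → ‖f z‖ ≤ 1) {n : ℕ} (hn : n ≠ 0) (x y : ℂ) :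
    ‖a 0 * x‖ ^ 2 + ‖a n * x + a 0 * y‖ ^ 2 ≤ ‖x‖ ^ 2 + ‖y‖ ^ 2 := by
  have key : ∀ ρ : ℝ, 0 ≤ ρ → ρ < 1 →
      ‖a 0 * x‖ ^ 2 + ‖a n * x * ρ ^ n + a 0 * ρ ^ n * y‖ ^ 2 ≤
        ‖x‖ ^ 2 + ‖(ρ : ℂ) ^ n * y‖ ^ 2 := by
    intro ρ h0 h1
    have hs := summable_norm_coeff hf h0 h1
    set q : ℕ → ℂ := fun k => a k * ρ ^ k with hq
    have hqs : Summable fun k => ‖q k‖ := by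
      simpa [hq, abs_of_nonneg h0] using hs
    set Y : ℂ := ρ ^ n * y with hY
    set u : ℕ → ℂ := fun k => x * q k + (if n ≤ k then Y * q (k - n) else 0) with hu
    set v : ℕ → ℂ := fun k => (if k = 0 then x else 0) + (if k = n then Y else 0) with hv
    have hshift : ∀ g : ℕ → ℂ, ∀ s : ℂ, HasSum g s →
        HasSum (fun k => if n ≤ k then g (k - n) else 0) s := by
      intro g s hg
      rw [← hasSum_nat_add_iff' n]
      have : ∑ i ∈ Finset.range n, (if n ≤ i then g (i - n) else 0) = 0 :=
        Finset.sum_eq_zero fun i hi => by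
          rw [if_neg (by simpa using hi)]
      simpa [this] using hg
    have hus : Summable fun k => ‖u k‖ := by
      refine Summable.norm ?_
      refine (hqs.of_norm.mul_left x).add ?_
      exact (hshift (fun k => Y * q k) _ (hqs.of_norm.mul_left Y).hasSum).summable
    have hvs : Summable fun k => ‖v k‖ :=
      Summable.norm ((hasSum_ite_eq 0 x).summable.add (hasSum_ite_eq n Y).summable)
    obtain ⟨hu2, hv2, hle⟩ := tsum_sq_le_of_circle u v hus hvs 1 (by
      intro w hw
      have hz : ‖(ρ : ℂ) * w‖ < 1 := by simpa [hw, abs_of_nonneg h0] using h1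
      have h3 : HasSum (fun k => q k * w ^ k) (f (ρ * w)) := by
        refine hasSum_of_eq (hf _ hz) (fun k => ?_) rfl
        simp only [hq, mul_pow]; ring
      have h4 : HasSum (fun k => u k * w ^ k) (x * f (ρ * w) + Y * w ^ n * f (ρ * w)) := by
        refine hasSum_of_eq ((h3.mul_left x).add (hshift _ _ (h3.mul_left (Y * w ^ n))))
          (fun k => ?_) rfl
        by_cases h : n ≤ k
        · obtain ⟨m, rfl⟩ := Nat.exists_eq_add_of_le h
          simp only [hu, h, if_true, Nat.add_sub_cancel_left]
          ring
        · simp only [hu, h, if_false]; ring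
      have h5 : HasSum (fun k => v k * w ^ k) (x + Y * w ^ n) := by
        refine hasSum_of_eq ((hasSum_ite_eq 0 x).add (hasSum_ite_eq n (Y * w ^ n)))
          (fun k => ?_) rfl
        simp only [hv]
        by_cases h : k = n
        · simp [h, hn]
        · by_cases h' : k = 0 <;> simp [h, h', Ne.symm hn]
      rw [h4.tsum_eq, h5.tsum_eq, ← add_mul, norm_mul, one_mul]
      exact mul_le_of_le_one_right (norm_nonneg _) (hbd _ hz))
    have hv' : HasSum (fun k => ‖v k‖ ^ 2) (‖x‖ ^ 2 + ‖Y‖ ^ 2) := by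
      refine hasSum_of_eq ((hasSum_ite_eq 0 (‖x‖ ^ 2)).add (hasSum_ite_eq n (‖Y‖ ^ 2)))
        (fun k => ?_) rfl
      simp only [hv]
      by_cases h : k = n
      · simp [h, hn]
      · by_cases h' : k = 0 <;> simp [h, h', Ne.symm hn]
    rw [hv'.tsum_eq, one_pow, one_mul] at hle
    have h6 := hu2.sum_le_tsum {0, n} (fun _ _ => by positivity)
    rw [Finset.sum_pair (Ne.symm hn)] at h6
    refine le_trans (le_of_eq ?_) (h6.trans hle)
    have e1 : u 0 = a 0 * x := by simp [hu, hq, hn, mul_comm]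
    have e2 : u n = a n * x * ρ ^ n + a 0 * ρ ^ n * y := by simp [hu, hq, hY]; ring
    rw [e1, e2]
  -- the limit `ρ → 1⁻`
  have hlim : ∀ g : ℝ → ℝ, Continuous g → Filter.Tendsto g (nhdsWithin 1 (Set.Iio 1)) (nhds (g 1)) :=
    fun g hg => hg.continuousAt.continuousWithinAt
  have hev : ∀ᶠ ρ : ℝ in nhdsWithin 1 (Set.Iio 1), 0 ≤ ρ ∧ ρ < 1 := by
    filter_upwards [Ico_mem_nhdsLT (show (0 : ℝ) < 1 by norm_num)] with ρ h using h
  have := le_of_tendsto_of_tendsto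
    (hlim (fun ρ => ‖a 0 * x‖ ^ 2 + ‖a n * x * ρ ^ n + a 0 * ρ ^ n * y‖ ^ 2) (by fun_prop))
    (hlim (fun ρ => ‖x‖ ^ 2 + ‖(ρ : ℂ) ^ n * y‖ ^ 2) (by fun_prop))
    (hev.mono fun ρ h => key ρ h.1 h.2)
  simpa using this

lemma norm_coeff_zero_le (hf : ∀ z : ℂ, ‖z‖ < 1 → HasSum (fun n => a n * z ^ n) (f z))
    (hbd : ∀ z : ℂ, ‖z‖ < 1 → ‖f z‖ ≤ 1) : ‖a 0‖ ≤ 1 := by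
  rw [← value_zero hf]; exact hbd 0 (by simp)

lemma norm_coeff_le (hf : ∀ z : ℂ, ‖z‖ < 1 → HasSum (fun n => a n * z ^ n) (f z))
    (hbd : ∀ z : ℂ, ‖z‖ < 1 → ‖f z‖ ≤ 1) {n : ℕ} (hn : n ≠ 0) : ‖a n‖ ≤ 1 - ‖a 0‖ ^ 2 := by
  have h0 := norm_coeff_zero_le hf hbd
  have hc : 0 ≤ 1 - ‖a 0‖ ^ 2 := by nlinarith [norm_nonneg (a 0)]
  rcases hc.eq_or_lt with hc | hc
  · have := toeplitz_two_le hf hbd hn 1 0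
    simp only [mul_one, mul_zero, add_zero, norm_one, norm_zero] at this
    nlinarith [norm_nonneg (a n)]
  · -- the extremal test vector for the two-by-two Toeplitz matrix
    have := toeplitz_two_le hf hbd hn ((1 - ‖a 0‖ ^ 2 : ℝ) : ℂ) ((starRingEnd ℂ) (a 0) * a n)
    have e : a n * ((1 - ‖a 0‖ ^ 2 : ℝ) : ℂ) + a 0 * ((starRingEnd ℂ) (a 0) * a n) = a n := by
      rw [← mul_assoc, Complex.mul_conj, Complex.normSq_eq_norm_sq]
      push_cast; ring
    rw [e, norm_mul, norm_mul, Complex.norm_real, RCLike.norm_conj, Real.norm_of_nonneg hc.le] at this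
    have h2 : ‖a n‖ ^ 2 * (1 - ‖a 0‖ ^ 2) ≤ (1 - ‖a 0‖ ^ 2) ^ 2 * (1 - ‖a 0‖ ^ 2) := by
      nlinarith
    exact (sq_le_sq₀ (norm_nonneg _) hc.le).mp (le_of_mul_le_mul_right h2 hc)

/-- Schwarz–Pick at the origin, in a form free of division. -/
lemma schwarz_pick (hf : ∀ z : ℂ, ‖z‖ < 1 → HasSum (fun n => a n * z ^ n) (f z))
    (hbd : ∀ z : ℂ, ‖z‖ < 1 → ‖f z‖ ≤ 1) (h1 : ‖a 0‖ < 1) {z : ℂ} (hz : ‖z‖ < 1) :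
    ‖f z - a 0‖ ≤ ‖z‖ * ‖1 - (starRingEnd ℂ) (a 0) * f z‖ := by
  have hden : ∀ w : ℂ, ‖w‖ < 1 → 1 - (starRingEnd ℂ) (a 0) * f w ≠ 0 := by
    intro w hw h
    have : ‖(starRingEnd ℂ) (a 0) * f w‖ = 1 := by rw [← sub_eq_zero.mp h]; simp
    rw [norm_mul, RCLike.norm_conj] at this
    nlinarith [hbd w hw, norm_nonneg (a 0), norm_nonneg (f w)]
  have hd := differentiableOn_of_hasSum hf
  have := Complex.norm_le_norm_of_mapsTo_ball
    (f := fun w => (f w - a 0) / (1 - (starRingEnd ℂ) (a 0) * f w)) (R := 1) (z := z)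
    ((hd.sub_const _).div ((hd.const_mul _).const_sub _)
      fun w hw => hden w (by simpa using hw)) ?_ (by simp [value_zero hf]) hz
  · rw [norm_div, div_le_iff₀ (norm_pos_iff.mpr (hden z hz))] at this
    exact this
  · intro w hw
    have hw : ‖w‖ < 1 := by simpa using hw
    rw [mem_closedBall_zero_iff, norm_div, div_le_one (norm_pos_iff.mpr (hden w hw))]
    refine (sq_le_sq₀ (norm_nonneg _) (norm_nonneg _)).mp ?_
    have hb : ‖f w‖ ^ 2 ≤ 1 := by nlinarith [hbd w hw, norm_nonneg (f w)]
    have ha : ‖a 0‖ ^ 2 ≤ 1 := by nlinarith [norm_nonneg (a 0)]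
    rw [Complex.sq_norm, Complex.normSq_apply] at hb ha
    rw [Complex.sq_norm, Complex.normSq_apply, Complex.sq_norm, Complex.normSq_apply]
    -- `|1 - ā₀ w|² - |w - a₀|² = (1 - |w|²) (1 - |a₀|²)` at the value `w` of `f`
    simp only [Complex.sub_re, Complex.sub_im, Complex.mul_re, Complex.mul_im, Complex.conj_re,
      Complex.conj_im, Complex.one_re, Complex.one_im]
    nlinarith [mul_nonneg (sub_nonneg.mpr hb) (sub_nonneg.mpr ha)]

/-- The weighted `ℓ²` estimate `∑_{k ≥ 1} |aₖ|² 3⁻ᵏ ≤ (1 - |a₀|²)² / (3 - |a₀|²)`. -/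
lemma tsum_sq_third_le (hf : ∀ z : ℂ, ‖z‖ < 1 → HasSum (fun n => a n * z ^ n) (f z))
    (hbd : ∀ z : ℂ, ‖z‖ < 1 → ‖f z‖ ≤ 1) (h1 : ‖a 0‖ < 1) :
    (Summable fun k => ‖a (k + 1)‖ ^ 2 * (1 / 3 : ℝ) ^ (k + 1)) ∧
      (∑' k, ‖a (k + 1)‖ ^ 2 * (1 / 3 : ℝ) ^ (k + 1)) * (3 - ‖a 0‖ ^ 2) ≤
        (1 - ‖a 0‖ ^ 2) ^ 2 := by
  set ρ : ℝ := √(1 / 3) with hρ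
  have h0 : 0 ≤ ρ := Real.sqrt_nonneg _
  have hsq : ρ ^ 2 = 1 / 3 := Real.sq_sqrt (by norm_num)
  have hlt : ρ < 1 := by nlinarith
  set c : ℝ := 1 - ‖a 0‖ ^ 2 with hc
  set u : ℕ → ℂ := fun k => if k = 0 then 0 else a k * ρ ^ k with hu
  set v : ℕ → ℂ := fun k => (if k = 0 then (c : ℂ) else 0) - (starRingEnd ℂ) (a 0) * u k with hv
  have hser : ∀ w : ℂ, ‖w‖ = 1 → HasSum (fun k => u k * w ^ k) (f (ρ * w) - a 0) := by
    intro w hw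
    have hz : ‖(ρ : ℂ) * w‖ < 1 := by simpa [hw, abs_of_nonneg h0] using hlt
    refine hasSum_of_eq ((hf _ hz).sub (hasSum_ite_eq 0 (a 0))) (fun k => ?_) rfl
    simp only [hu]
    by_cases h : k = 0
    · simp [h]
    · simp [h]; ring
  have hus : Summable fun k => ‖u k‖ := by
    simpa using (hser 1 (by simp)).summable.norm
  have hvs : Summable fun k => ‖v k‖ :=
    Summable.norm ((hasSum_ite_eq 0 (c : ℂ)).summable.sub (hus.of_norm.mul_left _))
  obtain ⟨hu2, hv2, hle⟩ := tsum_sq_le_of_circle u v hus hvs ρ (by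
    intro w hw
    have hz : ‖(ρ : ℂ) * w‖ < 1 := by simpa [hw, abs_of_nonneg h0] using hlt
    have h5 : HasSum (fun k => v k * w ^ k) (1 - (starRingEnd ℂ) (a 0) * f (ρ * w)) := by
      refine hasSum_of_eq ((hasSum_ite_eq 0 (c : ℂ)).sub
        ((hser w hw).mul_left ((starRingEnd ℂ) (a 0)))) (fun k => ?_) ?_
      · simp only [hv]
        by_cases h : k = 0
        · simp [h]
        · simp [h]; ring
      · rw [mul_sub, ← Complex.normSq_eq_conj_mul_self, Complex.normSq_eq_norm_sq, hc]
        push_cast; ring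
    rw [(hser w hw).tsum_eq, h5.tsum_eq]
    simpa [hw, abs_of_nonneg h0] using schwarz_pick hf hbd h1 hz)
  have hterm : ∀ k, ‖u (k + 1)‖ ^ 2 = ‖a (k + 1)‖ ^ 2 * (1 / 3 : ℝ) ^ (k + 1) := by
    intro k
    simp only [hu, Nat.succ_ne_zero, if_false, norm_mul, norm_pow, Complex.norm_real,
      Real.norm_of_nonneg h0, mul_pow, ← hsq]
    ring
  have hvt : ∀ k, ‖v (k + 1)‖ ^ 2 = ‖a 0‖ ^ 2 * (‖a (k + 1)‖ ^ 2 * (1 / 3 : ℝ) ^ (k + 1)) := by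
    intro k
    rw [← hterm]
    simp [hv, mul_pow]
  have hs : Summable fun k => ‖a (k + 1)‖ ^ 2 * (1 / 3 : ℝ) ^ (k + 1) := by
    simpa only [hterm] using (summable_nat_add_iff 1).mpr hu2
  refine ⟨hs, ?_⟩
  have hv0 : ‖v 0‖ ^ 2 = c ^ 2 := by simp [hv, hu]
  have hu0 : ‖u 0‖ ^ 2 = 0 := by simp [hu]
  rw [hu2.tsum_eq_zero_add, hv2.tsum_eq_zero_add, hv0, hu0] at hle
  simp only [hterm, hvt, tsum_mul_left, hsq] at hle
  linarith

end

/-- The scalar inequality left after inserting the two coefficient estimates; both sides agree to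
second order at `x = 1`. -/
lemma scalar_ineq {x : ℝ} (h0 : 0 ≤ x) (h1 : x < 1) :
    x + ((1 - x ^ 2) * (3 - x) / (4 * (3 - x ^ 2)) + (1 - x ^ 2) / (2 * (3 - x))) +
      16 * (1 - x ^ 2) ^ 2 / (64 - 9 * (1 - x ^ 2) ^ 2) ≤ 1 := by
  have d1 : 0 < 3 - x := by linarith
  have d2 : 0 < 3 - x ^ 2 := by nlinarith
  have hc0 : 0 ≤ 1 - x ^ 2 := by nlinarith
  have hc1 : (1 - x ^ 2) ^ 2 ≤ 1 := by nlinarith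
  have d3 : 0 < 64 - 9 * (1 - x ^ 2) ^ 2 := by linarith
  have hx : 0 ≤ 1 - x := by linarith
  set Q : ℝ := 40 - 8 * x ^ 2 - 9 * (1 - x) * (1 + x) ^ 2 with hQ
  have hQ0 : 28 ≤ Q + 4 * x ^ 2 := by
    have : 9 * (1 - x) * (1 + x) ^ 2 ≤ 12 - 4 * x ^ 2 := by
      nlinarith [sq_nonneg (x - 1 / 3), mul_nonneg h0 (sq_nonneg (3 * x - 1)), mul_nonneg h0 hx]
    nlinarith
  have hQ1 : 24 * (1 + x) ≤ Q * (3 - x ^ 2) := by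
    have : (28 - 4 * x ^ 2) * (3 - x ^ 2) ≤ Q * (3 - x ^ 2) := by
      apply mul_le_mul_of_nonneg_right _ d2.le; linarith
    nlinarith [mul_nonneg h0 hx, mul_nonneg (mul_nonneg h0 hx) h0, sq_nonneg (1 - x)]
  have hB : 16 * (1 - x ^ 2) ^ 2 / (64 - 9 * (1 - x ^ 2) ^ 2) ≤
      (1 - x) ^ 2 / (3 - x) * (2 - (1 - x) * Q / 32) := by
    rw [div_mul_eq_mul_div, div_le_div_iff₀ d3 d1]
    have hQn : 0 ≤ Q := by nlinarith
    have e : 16 * (1 + x) ^ 2 * (3 - x) ≤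
        (2 - (1 - x) * Q / 32) * (64 - 9 * (1 - x ^ 2) ^ 2) := by
      have e1 : 64 - 9 * (1 - x ^ 2) ^ 2 = 8 * (1 + x) ^ 2 * (3 - x) + (1 - x) * Q := by
        rw [hQ]; ring
      have : (1 - x) * Q / 32 * (64 - 9 * (1 - x ^ 2) ^ 2) ≤ (1 - x) * Q / 32 * 64 := by
        apply mul_le_mul_of_nonneg_left _ (by positivity)
        nlinarith [sq_nonneg (1 - x ^ 2)]
      nlinarith
    have := mul_le_mul_of_nonneg_left e (sq_nonneg (1 - x))
    nlinarith
  have hA : (1 - x ^ 2) * (3 - x) / (4 * (3 - x ^ 2)) + (1 - x ^ 2) / (2 * (3 - x)) =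
      (1 - x) - (1 - x) ^ 2 / (3 - x) * (2 - (1 - x) * (3 * (1 + x) / (4 * (3 - x ^ 2)))) := by
    field_simp
    ring
  have hE : 3 * (1 + x) / (4 * (3 - x ^ 2)) ≤ Q / 32 := by
    rw [div_le_div_iff₀ (by positivity) (by norm_num)]
    linarith
  have hF : (1 - x) ^ 2 / (3 - x) * (2 - (1 - x) * Q / 32) ≤
      (1 - x) ^ 2 / (3 - x) * (2 - (1 - x) * (3 * (1 + x) / (4 * (3 - x ^ 2)))) := by
    apply mul_le_mul_of_nonneg_left _ (by positivity)
    have := mul_le_mul_of_nonneg_left hE hx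
    linarith
  linarith

/-- Improved Bohr inequality with S_r/(π - S_r) term. -/
theorem bohr_improved_area_ratio (f : ℂ → ℂ) (a : ℕ → ℂ)
    (hf : ∀ z : ℂ, ‖z‖ < 1 → HasSum (fun n => a n * z ^ n) (f z))
    (hbd : ∀ z : ℂ, ‖z‖ < 1 → ‖f z‖ ≤ 1)
    (r : ℝ) (hr0 : 0 ≤ r) (hr : r ≤ 1 / 3)
    (S : ℝ) (hS : S = Real.pi * ∑' n : ℕ, (n : ℝ) * ‖a n‖ ^ 2 * r ^ (2 * n)) :
    ∑' n : ℕ, ‖a n‖ * r ^ n + (16 / 9) * (S / (Real.pi - S)) ≤ 1 := by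
  set x : ℝ := ‖a 0‖ with hx
  set c : ℝ := 1 - x ^ 2 with hc
  have hx0 : 0 ≤ x := norm_nonneg _
  have hx1 : x ≤ 1 := norm_coeff_zero_le hf hbd
  have hcoef : ∀ n, n ≠ 0 → ‖a n‖ ≤ c := fun n hn => norm_coeff_le hf hbd hn
  have hc0 : 0 ≤ c := by rw [hc]; nlinarith
  have hc1 : c ^ 2 ≤ 1 := by rw [hc] at *; nlinarith [sq_nonneg x]
  set σ : ℝ := ∑' n : ℕ, (n : ℝ) * ‖a n‖ ^ 2 * r ^ (2 * n) with hσ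
  have hσ0 : 0 ≤ σ := tsum_nonneg fun n => by positivity
  -- `∑ n 9⁻ⁿ = 9 / 64`
  have hσ1 : σ ≤ 9 / 64 * c ^ 2 := by
    have hg : HasSum (fun n : ℕ => (n : ℝ) * (1 / 9 : ℝ) ^ n) (9 / 64) := by
      have := hasSum_coe_mul_geometric_of_norm_lt_one (r := (1 / 9 : ℝ)) (by norm_num)
      exact hasSum_of_eq this (fun _ => rfl) (by norm_num)
    have hg' := hg.mul_left (c ^ 2)
    have hle : ∀ n : ℕ, (n : ℝ) * ‖a n‖ ^ 2 * r ^ (2 * n) ≤ c ^ 2 * (n * (1 / 9 : ℝ) ^ n) := by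
      intro n
      rcases eq_or_ne n 0 with rfl | hn
      · simp
      · have e1 : ‖a n‖ ^ 2 ≤ c ^ 2 := pow_le_pow_left₀ (norm_nonneg _) (hcoef n hn) 2
        have e2 : r ^ (2 * n) ≤ (1 / 9 : ℝ) ^ n := by
          rw [pow_mul]
          exact pow_le_pow_left₀ (by positivity) (by nlinarith) n
        calc (n : ℝ) * ‖a n‖ ^ 2 * r ^ (2 * n) ≤ n * c ^ 2 * (1 / 9 : ℝ) ^ n := by gcongr
          _ = _ := by ring
    calc σ ≤ ∑' n : ℕ, c ^ 2 * (n * (1 / 9 : ℝ) ^ n) :=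
          Summable.tsum_le_tsum hle
            (Summable.of_nonneg_of_le (fun n => by positivity) hle hg'.summable) hg'.summable
      _ = 9 / 64 * c ^ 2 := by rw [hg'.tsum_eq]; ring
  have hden : 0 < 64 - 9 * c ^ 2 := by linarith
  have hratio : 16 / 9 * (S / (Real.pi - S)) ≤ 16 * c ^ 2 / (64 - 9 * c ^ 2) := by
    have e : S / (Real.pi - S) = σ / (1 - σ) := by
      rw [hS, show Real.pi - Real.pi * σ = Real.pi * (1 - σ) by ring,
        mul_div_mul_left _ _ Real.pi_ne_zero]
    rw [e, div_mul_div_comm, div_le_div_iff₀ (by nlinarith) hden]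
    nlinarith
  have hs3 : Summable fun n => ‖a n‖ * (1 / 3 : ℝ) ^ n :=
    summable_norm_coeff hf (by norm_num) (by norm_num)
  have hmono : ∑' n : ℕ, ‖a n‖ * r ^ n ≤ ∑' n : ℕ, ‖a n‖ * (1 / 3 : ℝ) ^ n :=
    Summable.tsum_le_tsum (fun n => by gcongr)
      (summable_norm_coeff hf hr0 (by linarith)) hs3
  rw [hs3.tsum_eq_zero_add] at hmono
  simp only [pow_zero, mul_one] at hmono
  rcases hx1.eq_or_lt with hx1 | hx1
  · -- `|a₀| = 1` kills every other coefficient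
    have hcz : c = 0 := by rw [hc, hx1]; norm_num
    have hz : ∀ n, ‖a (n + 1)‖ = 0 := fun n =>
      le_antisymm (hcz ▸ hcoef (n + 1) n.succ_ne_zero) (norm_nonneg _)
    simp only [hz, zero_mul, tsum_zero, hcz] at hmono hratio
    norm_num at hratio
    linarith
  · have hcp : 0 < c := by rw [hc]; nlinarith
    obtain ⟨hPs, hP⟩ := tsum_sq_third_le hf hbd hx1
    set P : ℝ := ∑' k, ‖a (k + 1)‖ ^ 2 * (1 / 3 : ℝ) ^ (k + 1) with hPdef
    have d1 : 0 < 3 - x := by linarith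
    have d2 : 0 < 3 - x ^ 2 := by nlinarith
    have hP' : P ≤ c ^ 2 / (3 - x ^ 2) := by rwa [le_div_iff₀ d2]
    have hgeo : HasSum (fun k : ℕ => (1 / 3 : ℝ) ^ (k + 1)) (1 / 2) := by
      exact hasSum_of_eq ((hasSum_geometric_of_lt_one (r := (1 / 3 : ℝ)) (by norm_num)
        (by norm_num)).mul_left (1 / 3)) (fun k => by ring) (by norm_num)
    -- AM-GM with the weight `2 c / (3 - x)`, which is optimal to second order at `x = 1`
    have hT : ∑' n : ℕ, ‖a (n + 1)‖ * (1 / 3 : ℝ) ^ (n + 1) ≤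
        (3 - x) / (4 * c) * P + c / (3 - x) * (1 / 2) := by
      have hR := (hPs.hasSum.mul_left ((3 - x) / (4 * c))).add (hgeo.mul_left (c / (3 - x)))
      rw [← hR.tsum_eq]
      refine Summable.tsum_le_tsum (fun n => ?_) ((summable_nat_add_iff 1).mpr hs3) hR.summable
      have e : ‖a (n + 1)‖ ≤ (3 - x) / (4 * c) * ‖a (n + 1)‖ ^ 2 + c / (3 - x) := by
        have : (3 - x) / (4 * c) * ‖a (n + 1)‖ ^ 2 + c / (3 - x) - ‖a (n + 1)‖ =
            ((3 - x) * ‖a (n + 1)‖ - 2 * c) ^ 2 / (4 * c * (3 - x)) := by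
          field_simp
          ring
        have h2 : 0 ≤ ((3 - x) * ‖a (n + 1)‖ - 2 * c) ^ 2 / (4 * c * (3 - x)) := by positivity
        linarith
      have := mul_le_mul_of_nonneg_right e (show (0 : ℝ) ≤ (1 / 3) ^ (n + 1) by positivity)
      linarith
    have hT2 : (3 - x) / (4 * c) * P ≤ c * (3 - x) / (4 * (3 - x ^ 2)) := by
      calc (3 - x) / (4 * c) * P ≤ (3 - x) / (4 * c) * (c ^ 2 / (3 - x ^ 2)) := by gcongr
        _ = _ := by field_simp
    have hT3 : c / (3 - x) * (1 / 2) = c / (2 * (3 - x)) := by field_simp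
    have := scalar_ineq hx0 hx1
    rw [← hc] at this
    linarith
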